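/- arXiv:1810.11386 — 4 statements merged into one kernel-verified Lean document; each statement's English description precedes it below -/
import Mathlib

section
/- Let r ≥ 2 be an integer, let k_1, …, k_r be integers each at least 2, and let i be an index with 1 ≤ i < r. Then R(k_1, …, k_r) > (R(k_1, …, k_i) − 1) · (R(k_{i+1}, …, k_r) − 1). -/
open Filter Topology
open scoped ENNReal

/-- `N` has the Ramsey property for the tuple `k`: every `r`-coloring of the
edges of the complete graph on `N` vertices admits a color `i` and a set of
`k i` vertices all of whose connecting edges have color `i`. -/
def ramseyProp {r : ℕ} (k : Fin r → ℕ) (N : ℕ) : Prop :=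
  ∀ c : Sym2 (Fin N) → Fin r, ∃ i : Fin r, ∃ S : Finset (Fin N),
    S.card = k i ∧ ∀ u ∈ S, ∀ v ∈ S, u ≠ v → c s(u, v) = i

/-- The multicolor Ramsey number `R(k 0, …, k (r-1))`: the least positive `N`
with the Ramsey property. -/
noncomputable def multiRamsey {r : ℕ} (k : Fin r → ℕ) : ℕ :=
  sInf {N | 0 < N ∧ ramseyProp k N}

/-- The diagonal multicolor Ramsey number `R_r(k)`. -/
noncomputable def diagRamsey (r k : ℕ) : ℕ :=
  multiRamsey (fun _ : Fin r => k)

/-- DC, the "decreasing conjecture". -/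
def DC : Prop :=
  ∀ (r : ℕ), 2 ≤ r → ∀ k : Fin r → ℕ, (∀ l, 2 ≤ k l) →
    ∀ i j : Fin r, i ≠ j → 3 ≤ k i → k i ≤ k j →
      multiRamsey (fun l => if l = i then k i - 1 else if l = j then k j + 1 else k l)
        ≤ multiRamsey k

/-!
Edge colorings of `V` and `W` without large monochromatic cliques combine lexicographically on
`V × W`: a pair in different fibers of `Prod.fst` gets the color of its first coordinates, a pair
in the same fiber that of its second coordinates. A monochromatic clique in a color of `V` meets
each fiber at most once, and one in a color of `W` lies in a single fiber, so either projects
injectively to a monochromatic clique of `V` or of `W`. Apply this to extremal colorings on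
`R(k₁) - 1` and `R(k₂) - 1` vertices.

Ramsey's theorem enters because the infimum `multiRamsey` would be `0` if no `N` had the Ramsey
property. It follows by the Greenwood–Gleason recursion: among `∑ j, (N j - 1) + 2` vertices, each
has at least `N j` neighbors in some color `j`, where a clique of size `k j - 1` suffices.
-/

open Finset

variable {V W ι κ : Type*}

/-- The set `S` is a clique all of whose edges have color `i` under the edge coloring `c`.
The values of `c` on the diagonal of `Sym2 V` are irrelevant. -/
def IsMonochromatic (c : Sym2 V → ι) (i : ι) (S : Set V) : Prop :=
  S.Pairwise fun u v => c s(u, v) = i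

/-- The partition relation `V → (k i)_{i : ι}`: `ramseyProp` for arbitrary types of vertices and
of colors. -/
def RamseyArrow (V : Type*) (k : ι → ℕ) : Prop :=
  ∀ c : Sym2 V → ι, ∃ i, ∃ S : Finset V, #S = k i ∧ IsMonochromatic c i S

/-- The lexicographic product of two edge colorings: a pair is colored by `c₁` if its first
coordinates differ, and by `c₂` otherwise. -/
def lexColoring [DecidableEq V] (c₁ : Sym2 V → ι) (c₂ : Sym2 W → κ) (e : Sym2 (V × W)) : ι ⊕ κ :=
  if (e.map Prod.fst).IsDiag then .inr (c₂ (e.map Prod.snd)) else .inl (c₁ (e.map Prod.fst))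

theorem lexColoring_mk [DecidableEq V] (c₁ : Sym2 V → ι) (c₂ : Sym2 W → κ) (x y : V × W) :
    lexColoring c₁ c₂ s(x, y) =
      if x.1 = y.1 then .inr (c₂ s(x.2, y.2)) else .inl (c₁ s(x.1, y.1)) := by
  simp only [lexColoring, Sym2.map_mk, Sym2.mk_isDiag_iff]

theorem isMonochromatic_image_iff {c : Sym2 W → ι} {i : ι} {f : V → W} {S : Set V}
    (hf : S.InjOn f) :
    IsMonochromatic c i (f '' S) ↔ IsMonochromatic (fun e => c (e.map f)) i S :=
  hf.pairwise_image

namespace IsMonochromatic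

theorem insert {c : Sym2 V → ι} {i : ι} {S : Set V} {v : V} (hS : IsMonochromatic c i S)
    (hv : ∀ u ∈ S, c s(v, u) = i) : IsMonochromatic c i (insert v S) :=
  Set.Pairwise.insert hS fun u hu _ => ⟨hv u hu, by rw [Sym2.eq_swap, hv u hu]⟩

section Lexicographic

variable [DecidableEq V] {c₁ : Sym2 V → ι} {c₂ : Sym2 W → κ} {S : Set (V × W)} {i : ι} {j : κ}

theorem injOn_fst_of_lexColoring (h : IsMonochromatic (lexColoring c₁ c₂) (.inl i) S) :
    S.InjOn Prod.fst := by
  intro x hx y hy hxy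
  by_contra hne
  simpa [lexColoring_mk, hxy] using h hx hy hne

theorem image_fst_of_lexColoring (h : IsMonochromatic (lexColoring c₁ c₂) (.inl i) S) :
    IsMonochromatic c₁ i (Prod.fst '' S) := by
  have hinj := h.injOn_fst_of_lexColoring
  refine (isMonochromatic_image_iff hinj).2 fun x hx y hy hxy => ?_
  simpa [lexColoring_mk, hinj.ne hx hy hxy] using h hx hy hxy

theorem fst_eq_of_lexColoring (h : IsMonochromatic (lexColoring c₁ c₂) (.inr j) S) :
    S.Pairwise fun x y => x.1 = y.1 := by
  intro x hx y hy hne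
  by_contra hxy
  simpa [lexColoring_mk, hxy] using h hx hy hne

theorem injOn_snd_of_lexColoring (h : IsMonochromatic (lexColoring c₁ c₂) (.inr j) S) :
    S.InjOn Prod.snd := by
  intro x hx y hy hxy
  by_contra hne
  exact hne (Prod.ext (h.fst_eq_of_lexColoring hx hy hne) hxy)

theorem image_snd_of_lexColoring (h : IsMonochromatic (lexColoring c₁ c₂) (.inr j) S) :
    IsMonochromatic c₂ j (Prod.snd '' S) := by
  refine (isMonochromatic_image_iff h.injOn_snd_of_lexColoring).2 fun x hx y hy hxy => ?_
  simpa [lexColoring_mk, h.fst_eq_of_lexColoring hx hy hxy] using h hx hy hxy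

end Lexicographic

end IsMonochromatic

namespace RamseyArrow

theorem exists_subset [Fintype V] {k : ι → ℕ} (h : RamseyArrow V k) (c : Sym2 W → ι)
    {T : Finset W} (hT : Fintype.card V ≤ #T) :
    ∃ i, ∃ S ⊆ T, #S = k i ∧ IsMonochromatic c i S := by
  obtain ⟨f⟩ : Nonempty (V ↪ T) :=
    Function.Embedding.nonempty_of_card_le (by rwa [Fintype.card_coe])
  let g : V ↪ W := f.trans (Function.Embedding.subtype _)
  obtain ⟨i, S, hcard, hS⟩ := h fun e => c (e.map g)
  refine ⟨i, S.map g, ?_, by rwa [card_map], ?_⟩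
  · simp [g, Finset.subset_iff]
  · rw [coe_map]
    exact (isMonochromatic_image_iff g.injective.injOn).2 hS

theorem of_card_le [Fintype V] [Fintype W] {k : ι → ℕ} (h : RamseyArrow V k)
    (hVW : Fintype.card V ≤ Fintype.card W) : RamseyArrow W k := fun c =>
  let ⟨i, S, _, hS⟩ := h.exists_subset c (T := univ) hVW
  ⟨i, S, hS⟩

theorem comp_equiv {k : κ → ℕ} (h : RamseyArrow V k) (e : ι ≃ κ) : RamseyArrow V (k ∘ e) := by
  intro c
  obtain ⟨i, S, hcard, hS⟩ := h (e ∘ c)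
  exact ⟨e.symm i, S, by simpa using hcard, fun u hu v hv huv => e.eq_symm_apply.2 (hS hu hv huv)⟩

theorem left_or_right_of_prod {k₁ : ι → ℕ} {k₂ : κ → ℕ}
    (h : RamseyArrow (V × W) (Sum.elim k₁ k₂)) : RamseyArrow V k₁ ∨ RamseyArrow W k₂ := by
  classical
  by_contra! hcon
  simp only [RamseyArrow, not_forall] at hcon
  obtain ⟨⟨c₁, hc₁⟩, c₂, hc₂⟩ := hcon
  obtain ⟨i | j, S, hcard, hS⟩ := h (lexColoring c₁ c₂)
  · refine hc₁ ⟨i, S.image Prod.fst, ?_, ?_⟩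
    · rwa [card_image_of_injOn hS.injOn_fst_of_lexColoring]
    · rw [coe_image]
      exact hS.image_fst_of_lexColoring
  · refine hc₂ ⟨j, S.image Prod.snd, ?_, ?_⟩
    · rwa [card_image_of_injOn hS.injOn_snd_of_lexColoring]
    · rw [coe_image]
      exact hS.image_snd_of_lexColoring

end RamseyArrow

theorem exists_le_card_filter_color [Fintype V] [DecidableEq V] [Fintype ι] [DecidableEq ι]
    {N : ι → ℕ} (hV : ∑ j, (N j - 1) + 2 ≤ Fintype.card V) (c : Sym2 V → ι) (v : V) :
    ∃ j, N j ≤ #{u ∈ univ.erase v | c s(v, u) = j} := by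
  have hsum : ∑ j, (N j - 1) < ∑ j, #{u ∈ univ.erase v | c s(v, u) = j} := by
    rw [← card_eq_sum_card_fiberwise (fun _ _ => mem_coe.2 (mem_univ _)),
      card_erase_of_mem (mem_univ v), card_univ]
    omega
  obtain ⟨j, -, hj⟩ := exists_lt_of_sum_lt hsum
  exact ⟨j, by omega⟩

theorem ramseyArrow_of_forall_update [Fintype V] [Fintype ι] [DecidableEq ι] {k N : ι → ℕ}
    (hk : ∀ j, k j ≠ 0) (hN : ∀ j, RamseyArrow (Fin (N j)) (Function.update k j (k j - 1)))
    (hV : ∑ j, (N j - 1) + 2 ≤ Fintype.card V) : RamseyArrow V k := by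
  classical
  intro c
  obtain ⟨v⟩ : Nonempty V := Fintype.card_pos_iff.1 (by omega)
  obtain ⟨j, hj⟩ := exists_le_card_filter_color hV c v
  obtain ⟨i, S, hST, hcard, hS⟩ := (hN j).exists_subset c (by rwa [Fintype.card_fin])
  have hvS : v ∉ S := fun hv => by simpa using hST hv
  have hcolor : ∀ u ∈ S, c s(v, u) = j := fun u hu => (mem_filter.1 (hST hu)).2
  obtain rfl | hij := eq_or_ne i j
  · refine ⟨i, insert v S, ?_, ?_⟩
    · rw [card_insert_of_notMem hvS, hcard, Function.update_self, Nat.sub_one_add_one (hk i)]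
    · rw [coe_insert]
      exact hS.insert hcolor
  · exact ⟨i, S, by rwa [Function.update_of_ne hij] at hcard, hS⟩

theorem exists_ramseyArrow_fin [Finite ι] (k : ι → ℕ) : ∃ N, RamseyArrow (Fin N) k := by
  classical
  cases nonempty_fintype ι
  induction k using WellFoundedLT.induction with
  | ind k ih =>
    by_cases hk : ∃ i, k i = 0
    · obtain ⟨i, hi⟩ := hk
      exact ⟨0, fun c => ⟨i, ∅, by simp [hi], by simp [IsMonochromatic]⟩⟩
    · push Not at hk
      have hlt (j : ι) : Function.update k j (k j - 1) < k :=
        update_lt_self_iff.2 (Nat.sub_one_lt (hk j))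
      choose N hN using fun j => ih _ (hlt j)
      exact ⟨_, ramseyArrow_of_forall_update hk hN (Fintype.card_fin _).ge⟩

section MultiRamsey

variable {r : ℕ} {k : Fin r → ℕ}

theorem multiRamsey_eq_sInf_ramseyArrow :
    multiRamsey k = sInf {N | 0 < N ∧ RamseyArrow (Fin N) k} :=
  rfl

variable (k) in
theorem multiRamsey_spec : 0 < multiRamsey k ∧ RamseyArrow (Fin (multiRamsey k)) k := by
  obtain ⟨N, hN⟩ := exists_ramseyArrow_fin k
  have hne : {N | 0 < N ∧ RamseyArrow (Fin N) k}.Nonempty :=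
    ⟨N + 1, N.succ_pos, hN.of_card_le (by simp)⟩
  rw [multiRamsey_eq_sInf_ramseyArrow]
  exact Nat.sInf_mem hne

theorem ramseyArrow_iff_multiRamsey_le_card [Fintype V] [Nonempty V] :
    RamseyArrow V k ↔ multiRamsey k ≤ Fintype.card V := by
  constructor
  · intro h
    rw [multiRamsey_eq_sInf_ramseyArrow]
    exact Nat.sInf_le ⟨Fintype.card_pos, h.of_card_le (Fintype.card_fin _).ge⟩
  · intro h
    exact (multiRamsey_spec k).2.of_card_le (by rwa [Fintype.card_fin])

end MultiRamsey

theorem append_comp_finSumFinEquiv {α : Type*} {a b : ℕ} (x : Fin a → α) (y : Fin b → α) :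
    Fin.append x y ∘ finSumFinEquiv = Sum.elim x y := by
  ext (i | j) <;> simp

/-- For tuples `k₁` of length `a ≥ 1` and `k₂` of length `b ≥ 1`
(so `r = a + b ≥ 2` and the split index `i = a` satisfies `1 ≤ i < r`), with all
entries at least `2`,
`R(k₁ ++ k₂) > (R(k₁) − 1) · (R(k₂) − 1)`. -/
theorem stmt0 {a b : ℕ} (ha : 1 ≤ a) (hb : 1 ≤ b)
    (k₁ : Fin a → ℕ) (k₂ : Fin b → ℕ)
    (hk₁ : ∀ l, 2 ≤ k₁ l) (hk₂ : ∀ l, 2 ≤ k₂ l) :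
    (multiRamsey k₁ - 1) * (multiRamsey k₂ - 1) < multiRamsey (Fin.append k₁ k₂) := by
  by_contra! hle
  have hpos := (multiRamsey_spec (Fin.append k₁ k₂)).1.trans_le hle
  obtain ⟨M, hM⟩ : ∃ M, multiRamsey k₁ - 1 = M + 1 :=
    Nat.exists_eq_add_one.2 (Nat.pos_of_mul_pos_right hpos)
  obtain ⟨N, hN⟩ : ∃ N, multiRamsey k₂ - 1 = N + 1 :=
    Nat.exists_eq_add_one.2 (Nat.pos_of_mul_pos_left hpos)
  have hprod : RamseyArrow (Fin (M + 1) × Fin (N + 1)) (Sum.elim k₁ k₂) := by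
    rw [← append_comp_finSumFinEquiv]
    refine (ramseyArrow_iff_multiRamsey_le_card.2 ?_).comp_equiv _
    rwa [Fintype.card_prod, Fintype.card_fin, Fintype.card_fin, ← hM, ← hN]
  obtain h | h := hprod.left_or_right_of_prod <;>
    rw [ramseyArrow_iff_multiRamsey_le_card, Fintype.card_fin] at h <;> omega
end

section
/- If DC holds, then for all integers k ≥ 3 and r ≥ 1, R_{2r}(k) ≥ R(k−1, …, k−1, k+1, …, k+1), where on the right-hand side there are r arguments equal to k−1 followed by r arguments equal to k+1. -/
open Filter Topology
open scoped ENNReal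

/-! Apply DC to the disjoint pairs of colors `t`, `r + t` one at a time: each pair still carries its
original entries when its turn comes, and all entries stay at least `2`, so DC applies again. -/

theorem castAdd_ne_natAdd {m n : ℕ} (i : Fin m) (j : Fin n) :
    Fin.castAdd n i ≠ Fin.natAdd m j :=
  ne_of_lt (i.isLt.trans_le (Nat.le_add_right m j))

section Append

open Function

variable {α : Type*} {m n : ℕ} (u : Fin m → α) (v : Fin n → α)

theorem append_update_left (i : Fin m) (x : α) :
    Fin.append (update u i x) v = update (Fin.append u v) (Fin.castAdd n i) x := by
  funext l
  cases l using Fin.addCases with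
  | left l => simp only [update_apply, Fin.append_left, Fin.castAdd_inj]
  | right l => simp only [Fin.append_right, update_of_ne (castAdd_ne_natAdd i l).symm]

theorem append_update_right (j : Fin n) (x : α) :
    Fin.append u (update v j x) = update (Fin.append u v) (Fin.natAdd m j) x := by
  funext l
  cases l using Fin.addCases with
  | left l => simp only [Fin.append_left, update_of_ne (castAdd_ne_natAdd l j)]
  | right l => simp only [update_apply, Fin.append_right, Fin.natAdd_inj]

end Append

namespace DC

open Function

theorem multiRamsey_update_update_le (hDC : DC) {n : ℕ} {k : Fin n → ℕ} (hk : ∀ l, 2 ≤ k l)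
    {i j : Fin n} (hij : i ≠ j) (hi : 3 ≤ k i) (hkij : k i ≤ k j) :
    multiRamsey (update (update k j (k j + 1)) i (k i - 1)) ≤ multiRamsey k := by
  have hn : 2 ≤ n := by omega
  simpa only [← update_apply] using hDC n hn k hk i j hij hi hkij

theorem multiRamsey_append_update_le (hDC : DC) {m n : ℕ} {u : Fin m → ℕ} {v : Fin n → ℕ}
    (hu : ∀ i, 2 ≤ u i) (hv : ∀ j, 2 ≤ v j) {i : Fin m} {j : Fin n} (hi : 3 ≤ u i)
    (hij : u i ≤ v j) :
    multiRamsey (Fin.append (update u i (u i - 1)) (update v j (v j + 1)))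
      ≤ multiRamsey (Fin.append u v) := by
  have huv : ∀ l, 2 ≤ Fin.append u v l := by
    simpa only [Fin.forall_fin_add, Fin.append_left, Fin.append_right] using ⟨hu, hv⟩
  rw [append_update_left, append_update_right]
  simpa only [Fin.append_left, Fin.append_right, hi, hij, forall_const] using
    hDC.multiRamsey_update_update_le huv (castAdd_ne_natAdd i j)

theorem multiRamsey_append_piecewise_le (hDC : DC) {r : ℕ} {a b : Fin r → ℕ}
    (ha : ∀ t, 3 ≤ a t) (hab : ∀ t, a t ≤ b t) (s : Finset (Fin r)) :
    multiRamsey (Fin.append (s.piecewise (fun t => a t - 1) a) (s.piecewise (fun t => b t + 1) b))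
      ≤ multiRamsey (Fin.append a b) := by
  induction s using Finset.induction with
  | empty => simp only [Finset.piecewise_empty, le_refl]
  | insert t s ht ih =>
    refine le_trans ?_ ih
    set u := s.piecewise (fun t => a t - 1) a
    set v := s.piecewise (fun t => b t + 1) b
    have hu : ∀ i, 2 ≤ u i := by grind [Finset.piecewise]
    have hv : ∀ j, 2 ≤ v j := by grind [Finset.piecewise]
    have hut : u t = a t := Finset.piecewise_eq_of_notMem _ _ _ ht
    have hvt : v t = b t := Finset.piecewise_eq_of_notMem _ _ _ ht
    rw [Finset.piecewise_insert, Finset.piecewise_insert, ← hut, ← hvt]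
    exact hDC.multiRamsey_append_update_le hu hv (hut ▸ ha t) (hut ▸ hvt ▸ hab t)

end DC

theorem stmt3_general (hDC : DC) {r : ℕ} {a b : Fin r → ℕ} (ha : ∀ t, 3 ≤ a t)
    (hab : ∀ t, a t ≤ b t) :
    multiRamsey (Fin.append (fun t => a t - 1) (fun t => b t + 1))
      ≤ multiRamsey (Fin.append a b) := by
  simpa only [Finset.piecewise_univ] using hDC.multiRamsey_append_piecewise_le ha hab Finset.univ

/-- if DC holds, then `R_{2r}(k) ≥ R(k−1, …, k−1, k+1, …, k+1)`,
with `r` entries `k−1` followed by `r` entries `k+1`. -/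
theorem stmt3 (hDC : DC) (k : ℕ) (hk : 3 ≤ k) (r : ℕ) (hr : 1 ≤ r) :
    multiRamsey (Fin.append (fun _ : Fin r => k - 1) (fun _ : Fin r => k + 1))
      ≤ diagRamsey (2 * r) k := by
  rw [diagRamsey, two_mul, ← Fin.append_castAdd_natAdd (f := fun _ : Fin (r + r) => k)]
  exact stmt3_general hDC (fun _ => hk) (fun _ => le_rfl)
end

section
/- If DC holds and L_3 is finite, then for every integer k ≥ 3 the limit L_k is finite. -/
open Filter Topology
open scoped ENNReal

/-!
Under DC, one color of clique size `k ≥ 4` may be traded for two colors of clique sizes `3` and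
`k - 1`: applied to the latter two, DC gives back the clique sizes `2` and `k`, and a color of
clique size `2` has no effect as long as another color is present. Repeating this until every
clique size is `3` gives `R_r(k) ≤ R_{r (k - 2)}(3)`, and taking `r`-th roots yields
`L_k ≤ L_3 ^ (k - 2)`.
-/

theorem ramseyProp_cons_two_iff {r : ℕ} [NeZero r] (k : Fin r → ℕ) (N : ℕ) :
    ramseyProp (Fin.cons 2 k : Fin (r + 1) → ℕ) N ↔ ramseyProp k N := by
  constructor
  · intro h c
    obtain ⟨i, S, hS, hmono⟩ := h (Fin.succ ∘ c)
    cases i using Fin.cases with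
    | zero =>
      obtain ⟨u, hu, v, hv, huv⟩ := Finset.one_lt_card.1 (hS ▸ one_lt_two : 1 < S.card)
      exact absurd (hmono u hu v hv huv) (Fin.succ_ne_zero _)
    | succ i =>
      exact ⟨i, S, hS, fun u hu v hv huv => Fin.succ_injective r (hmono u hu v hv huv)⟩
  · intro h c
    by_cases hc : ∃ u v : Fin N, u ≠ v ∧ c s(u, v) = 0
    · obtain ⟨u, v, huv, hzero⟩ := hc
      refine ⟨0, {u, v}, Finset.card_pair huv, ?_⟩
      simp only [Finset.mem_insert, Finset.mem_singleton]
      rintro x (rfl | rfl) y (rfl | rfl) hxy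
      exacts [absurd rfl hxy, hzero, Sym2.eq_swap ▸ hzero, absurd rfl hxy]
    · push Not at hc
      -- Color `0` occurs only on loops, so the color of `Fin r` replacing it is irrelevant.
      obtain ⟨i, S, hS, hmono⟩ := h ((Fin.cons 0 id : Fin (r + 1) → Fin r) ∘ c)
      refine ⟨i.succ, S, hS, fun u hu v hv huv => ?_⟩
      obtain ⟨l, hl⟩ := Fin.exists_succ_eq.2 (hc u v huv)
      have hli : l = i := by simpa [← hl] using hmono u hu v hv huv
      rw [← hl, hli]

theorem multiRamsey_cons_two {r : ℕ} [NeZero r] (k : Fin r → ℕ) :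
    multiRamsey (Fin.cons 2 k : Fin (r + 1) → ℕ) = multiRamsey k := by
  simp only [multiRamsey, ramseyProp_cons_two_iff]

/-- The clique sizes obtained from `k` by trading the color `j` for two colors, one of clique
size `3`, placed first, and one of clique size `k j - 1`, which keeps the position of `j`. It is
meant for `k j ≥ 4`, where DC applied to these two colors leads back to `k`. -/
def splitColor {r : ℕ} (k : Fin r → ℕ) (j : Fin r) : Fin (r + 1) → ℕ :=
  Fin.cons 3 (Function.update k j (k j - 1))

namespace splitColor

variable {r : ℕ} (k : Fin r → ℕ) (j : Fin r)

@[simp]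
theorem apply_zero : splitColor k j 0 = 3 :=
  rfl

@[simp]
theorem apply_succ (l : Fin r) : splitColor k j l.succ = if l = j then k j - 1 else k l := by
  rw [splitColor, Fin.cons_succ, Function.update_apply]

variable {k j}

theorem le_apply {b : ℕ} (hb : b ≤ 3) (hk : ∀ i, b ≤ k i) (hj : b < k j) (l : Fin (r + 1)) :
    b ≤ splitColor k j l := by
  cases l using Fin.cases with
  | zero => exact hb
  | succ l =>
    rw [apply_succ]
    split_ifs
    exacts [Nat.le_sub_one_of_lt hj, hk l]

theorem sum_sub_three_add_one (hj : 3 < k j) :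
    ∑ l, (splitColor k j l - 3) + 1 = ∑ i, (k i - 3) := by
  have herase : ∑ i ∈ Finset.univ.erase j, (splitColor k j i.succ - 3) =
      ∑ i ∈ Finset.univ.erase j, (k i - 3) :=
    Finset.sum_congr rfl fun i hi => by rw [apply_succ, if_neg (Finset.ne_of_mem_erase hi)]
  rw [Fin.sum_univ_succ, apply_zero, ← Finset.add_sum_erase _ _ (Finset.mem_univ j),
    ← Finset.add_sum_erase _ (fun i => k i - 3) (Finset.mem_univ j), herase, apply_succ,
    if_pos rfl]
  omega

end splitColor

theorem multiRamsey_le_multiRamsey_splitColor (hDC : DC) {r : ℕ} {k : Fin r → ℕ}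
    (hk : ∀ i, 2 ≤ k i) {j : Fin r} (hj : 3 < k j) :
    multiRamsey k ≤ multiRamsey (splitColor k j) := by
  have : NeZero r := ⟨j.pos.ne'⟩
  have hj' : splitColor k j j.succ = k j - 1 := by simp
  have shifted_eq : (fun l => if l = 0 then splitColor k j 0 - 1 else
      if l = j.succ then splitColor k j j.succ + 1 else splitColor k j l) = Fin.cons 2 k := by
    refine funext (Fin.cases (by simp) fun l => ?_)
    rcases eq_or_ne l j with rfl | hl
    · simp only [Fin.succ_ne_zero, if_false, if_true, hj', Fin.cons_succ]
      omega
    · simp [hl]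
  calc multiRamsey k = multiRamsey (Fin.cons 2 k : Fin (r + 1) → ℕ) :=
        (multiRamsey_cons_two k).symm
    _ ≤ multiRamsey (splitColor k j) := shifted_eq ▸
        hDC (r + 1) (Nat.succ_le_succ j.pos) (splitColor k j)
          (splitColor.le_apply (by norm_num) hk (by omega)) 0 j.succ (Fin.succ_ne_zero j).symm
          le_rfl (hj' ▸ Nat.le_sub_one_of_lt hj)

theorem multiRamsey_le_diagRamsey_three (hDC : DC) {r : ℕ} {k : Fin r → ℕ}
    (hk : ∀ i, 3 ≤ k i) :
    multiRamsey k ≤ diagRamsey (r + ∑ i, (k i - 3)) 3 := by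
  induction hs : ∑ i, (k i - 3) generalizing r with
  | zero =>
    have hk3 : k = fun _ => 3 := funext fun i =>
      (Nat.sub_eq_zero_iff_le.1 (Finset.sum_eq_zero_iff.1 hs i (Finset.mem_univ i))).antisymm
        (hk i)
    rw [hk3, add_zero, diagRamsey]
  | succ s ih =>
    obtain ⟨j, -, hj⟩ := Finset.exists_ne_zero_of_sum_ne_zero (hs.trans_ne s.succ_ne_zero)
    have three_lt : 3 < k j := Nat.lt_of_sub_ne_zero hj
    have sum_eq : ∑ l, (splitColor k j l - 3) = s :=
      Nat.succ_injective ((splitColor.sum_sub_three_add_one three_lt).trans hs)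
    calc multiRamsey k ≤ multiRamsey (splitColor k j) :=
          multiRamsey_le_multiRamsey_splitColor hDC (fun i => (Nat.le_succ 2).trans (hk i))
            three_lt
      _ ≤ diagRamsey (r + 1 + s) 3 := ih (splitColor.le_apply le_rfl hk three_lt) sum_eq
      _ = diagRamsey (r + (s + 1)) 3 := by rw [add_assoc, add_comm 1 s]

theorem diagRamsey_le_diagRamsey_mul_three (hDC : DC) (r : ℕ) {k : ℕ} (hk : 3 ≤ k) :
    diagRamsey r k ≤ diagRamsey (r * (k - 2)) 3 := by
  have hcolors : r + ∑ _ : Fin r, (k - 3) = r * (k - 2) := by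
    rw [Fin.sum_const, smul_eq_mul, show k - 2 = k - 3 + 1 by omega, mul_add_one, add_comm]
  exact hcolors ▸ multiRamsey_le_diagRamsey_three hDC fun _ => hk

theorem le_pow_of_tendsto_rpow_one_div {u v : ℕ → ℝ≥0∞} {a b : ℝ≥0∞} {m : ℕ} (hm : m ≠ 0)
    (hu : Tendsto (fun r : ℕ => u r ^ (1 / (r : ℝ))) atTop (𝓝 a))
    (hv : Tendsto (fun r : ℕ => v r ^ (1 / (r : ℝ))) atTop (𝓝 b))
    (huv : ∀ᶠ r in atTop, u r ≤ v (r * m)) : a ≤ b ^ m := by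
  have hmul : Tendsto (fun r : ℕ => r * m) atTop atTop :=
    tendsto_id.atTop_mul_const' (Nat.pos_of_ne_zero hm)
  have hvm := ((ENNReal.continuous_pow m).tendsto b).comp (hv.comp hmul)
  refine le_of_tendsto_of_tendsto hu hvm (huv.mono fun r hr => ?_)
  have hexp : 1 / ((r * m : ℕ) : ℝ) * m = 1 / r := by
    have : (m : ℝ) ≠ 0 := Nat.cast_ne_zero.2 hm
    rw [Nat.cast_mul, one_div_mul_eq_div, div_mul_cancel_right₀ this, one_div]
  calc u r ^ (1 / (r : ℝ)) ≤ v (r * m) ^ (1 / (r : ℝ)) := by gcongr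
    _ = (v (r * m) ^ (1 / ((r * m : ℕ) : ℝ))) ^ m := by
      rw [← hexp, ENNReal.rpow_mul, ENNReal.rpow_natCast]

theorem stmt6_general (hDC : DC) {k : ℕ} (hk : 3 ≤ k) {a b : ℝ≥0∞}
    (ha : Tendsto (fun r : ℕ => (diagRamsey r k : ℝ≥0∞) ^ (1 / (r : ℝ))) atTop (𝓝 a))
    (hb : Tendsto (fun r : ℕ => (diagRamsey r 3 : ℝ≥0∞) ^ (1 / (r : ℝ))) atTop (𝓝 b)) :
    a ≤ b ^ (k - 2) :=
  le_pow_of_tendsto_rpow_one_div (Nat.sub_ne_zero_of_lt hk) ha hb <|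
    .of_forall fun r => Nat.cast_le.2 (diagRamsey_le_diagRamsey_mul_three hDC r hk)

/-- if DC holds and `L_3` is finite, then `L_k` is finite for every
`k ≥ 3`, where `L j` is the limit of `r ↦ R_r(j)^{1/r}` in `[0, ∞]`. -/
theorem stmt6 (hDC : DC) (L : ℕ → ℝ≥0∞)
    (hL : ∀ j, 2 ≤ j →
      Tendsto (fun r : ℕ => ((diagRamsey r j : ℝ≥0∞)) ^ (1 / (r : ℝ))) atTop (𝓝 (L j)))
    (h3 : L 3 ≠ ⊤) :
    ∀ k, 3 ≤ k → L k ≠ ⊤ := by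
  intro k hk
  exact ne_top_of_le_ne_top (ENNReal.pow_ne_top h3)
    (stmt6_general hDC hk (hL k (by omega)) (hL 3 (by omega)))
end

section
/- If DC holds and L_k = +∞ for some integer k ≥ 3, then L_3 = +∞. -/
open Filter Topology
open scoped ENNReal

/-! The tuple `(3, …, 3)` of length `r q` falls into `r` blocks of length `q`. `DC` allows all
colors of a block but one to give a unit to the remaining color of that block, without increasing
the Ramsey number. This leaves in each block one entry `q + 2` and `q - 1` entries `2`. A color with
entry `2` can be discarded, since a single edge of that color is already a clique of the required
size. Hence `R_r(q + 2) ≤ R_{rq}(3)`, and taking `r`-th roots gives `L_{q + 2} ≤ L_3 ^ q`. -/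

section

open Function
open scoped Finset

variable {n r N : ℕ}

theorem ramseyProp.comp_of_eq_two {t : Fin n → ℕ} {e : Fin r → Fin n} (he : Injective e)
    (ht : ∀ l ∉ Set.range e, t l = 2) (h : ramseyProp t N) : ramseyProp (t ∘ e) N := by
  intro c
  obtain ⟨l, S, hS, hc⟩ := h (e ∘ c)
  by_cases hl : l ∈ Set.range e
  · obtain ⟨i, rfl⟩ := hl
    exact ⟨i, S, hS, fun u hu v hv huv => he (hc u hu v hv huv)⟩
  · obtain ⟨u, v, huv, rfl⟩ := Finset.card_eq_two.mp (hS.trans (ht l hl))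
    exact absurd ⟨_, hc u (by simp) v (by simp) huv⟩ hl

theorem ramseyProp.of_comp_of_eq_two {t : Fin n → ℕ} {e : Fin r → Fin n} {g : Fin n → Fin r}
    (ht : ∀ l, e (g l) ≠ l → t l = 2) (h : ramseyProp (t ∘ e) N) : ramseyProp t N := by
  intro c
  by_cases hc : ∀ u v, u ≠ v → e (g (c s(u, v))) = c s(u, v)
  · obtain ⟨i, S, hS, hi⟩ := h (g ∘ c)
    exact ⟨e i, S, hS, fun u hu v hv huv =>
      (hc u v huv).symm.trans (congrArg e (hi u hu v hv huv))⟩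
  · push Not at hc
    obtain ⟨u, v, huv, hl⟩ := hc
    refine ⟨c s(u, v), {u, v}, by rw [ht _ hl, Finset.card_pair huv], fun x hx y hy hne => ?_⟩
    have hxy : s(x, y) = s(u, v) := by grind [Sym2.eq_iff]
    rw [hxy]

theorem multiRamsey_comp_of_eq_two {t : Fin n → ℕ} {e : Fin r → Fin n} {g : Fin n → Fin r}
    (hge : LeftInverse g e) (ht : ∀ l, e (g l) ≠ l → t l = 2) :
    multiRamsey (t ∘ e) = multiRamsey t := by
  have hprop (N : ℕ) : ramseyProp (t ∘ e) N ↔ ramseyProp t N :=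
    ⟨.of_comp_of_eq_two ht, .comp_of_eq_two hge.injective fun l hl => ht l fun h => hl ⟨_, h⟩⟩
  simp only [multiRamsey, hprop]

/-- The tuple obtained from `t` when every color `a ∈ s` gives one unit to the color `f a`. It is
meant for `f` mapping `s` outside `s`: units received by colors in `s` are not counted. -/
def unitTransfer (t : Fin n → ℕ) (f : Fin n → Fin n) (s : Finset (Fin n)) : Fin n → ℕ :=
  fun l => if l ∈ s then t l - 1 else t l + #{a ∈ s | f a = l}

theorem unitTransfer_empty (t : Fin n → ℕ) (f : Fin n → Fin n) : unitTransfer t f ∅ = t := by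
  ext l
  simp [unitTransfer]

theorem unitTransfer_insert {t : Fin n → ℕ} {f : Fin n → Fin n} {s : Finset (Fin n)} {a : Fin n}
    (ha : a ∉ s) (hs : ∀ b ∈ insert a s, f b ∉ insert a s) :
    unitTransfer t f (insert a s) = fun l =>
      if l = a then unitTransfer t f s a - 1
      else if l = f a then unitTransfer t f s (f a) + 1 else unitTransfer t f s l := by
  have hfa : f a ≠ a ∧ f a ∉ s := by simpa using hs a (Finset.mem_insert_self a s)
  have hsa : {b ∈ s | f b = a} = (∅ : Finset (Fin n)) :=
    Finset.filter_eq_empty_iff.mpr fun b hb h =>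
      hs b (Finset.mem_insert_of_mem hb) (h ▸ Finset.mem_insert_self a s)
  funext l
  by_cases hla : l = a
  · simp [unitTransfer, hla, ha, hsa]
  by_cases hlf : l = f a
  · simp [unitTransfer, hlf, hfa, Finset.filter_insert, ha, add_assoc]
  · simp [unitTransfer, hla, hlf, Finset.filter_insert, Ne.symm hlf]

theorem DC.multiRamsey_unitTransfer_le (hDC : DC) {t : Fin n → ℕ} (ht : ∀ l, 2 ≤ t l)
    {f : Fin n → Fin n} {s : Finset (Fin n)} (hs : ∀ a ∈ s, f a ∉ s)
    (hts : ∀ a ∈ s, 3 ≤ t a ∧ t a ≤ t (f a)) :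
    multiRamsey (unitTransfer t f s) ≤ multiRamsey t := by
  induction s using Finset.induction_on with
  | empty => rw [unitTransfer_empty]
  | insert a s ha ih =>
    have hfa : f a ≠ a ∧ f a ∉ s := by simpa using hs a (Finset.mem_insert_self a s)
    have hn : 2 ≤ n := Fin.nontrivial_iff_two_le.mp ⟨f a, a, hfa.1⟩
    have hfs : ∀ b ∈ s, f b ∉ s ∧ f b ≠ a := by grind
    obtain ⟨hthree, hle⟩ := hts a (Finset.mem_insert_self a s)
    have htwo : ∀ l, 2 ≤ unitTransfer t f s l := by
      intro l
      have := ht l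
      unfold unitTransfer
      grind
    have hta : unitTransfer t f s a = t a := by
      simp [unitTransfer, ha, Finset.filter_eq_empty_iff.mpr fun b hb => (hfs b hb).2]
    have htf : t (f a) ≤ unitTransfer t f s (f a) := by simp [unitTransfer, hfa.2]
    rw [unitTransfer_insert ha hs]
    exact (hDC n hn _ htwo a (f a) hfa.1.symm (hthree.trans_eq hta.symm)
      ((hta.trans_le hle).trans htf)).trans
      (ih (fun b hb => (hfs b hb).1) fun b hb => hts b (Finset.mem_insert_of_mem hb))

theorem card_fiber_eq_card_ne_add_one {α β : Type*} [Fintype α] [DecidableEq α] [DecidableEq β]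
    {g : α → β} {e : β → α} (hge : LeftInverse g e) (i : β) :
    #{a | g a = i} = #{a | e (g a) ≠ a ∧ e (g a) = e i} + 1 := by
  have hinsert : ({a | g a = i} : Finset α) =
      insert (e i) ({a | e (g a) ≠ a ∧ e (g a) = e i} : Finset α) := by
    ext a
    simp only [hge.injective.eq_iff, Finset.mem_filter_univ, Finset.mem_insert]
    grind [hge i]
  rw [hinsert, Finset.card_insert_of_notMem (by simp [hge i])]

theorem DC.multiRamsey_card_fiber_add_two_le (hDC : DC) {g : Fin n → Fin r}
    (hg : Surjective g) : multiRamsey (fun i => #{a | g a = i} + 2) ≤ diagRamsey n 3 := by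
  obtain ⟨e, hge⟩ := hg.hasRightInverse
  let s : Finset (Fin n) := {a | e (g a) ≠ a}
  let t : Fin n → ℕ := unitTransfer (fun _ => 3) (e ∘ g) s
  have htwo : ∀ a, e (g a) ≠ a → t a = 2 := fun a ha => by simp [t, s, unitTransfer, ha]
  have hfiber : t ∘ e = fun i => #{a | g a = i} + 2 := by
    funext i
    calc t (e i) = 3 + #{a | e (g a) ≠ a ∧ e (g a) = e i} := by
          simp [t, s, unitTransfer, hge i, Finset.filter_filter]
      _ = #{a | g a = i} + 2 := by rw [card_fiber_eq_card_ne_add_one hge]; ring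
  calc multiRamsey (fun i => #{a | g a = i} + 2)
      = multiRamsey (t ∘ e) := by rw [hfiber]
    _ = multiRamsey t := multiRamsey_comp_of_eq_two hge htwo
    _ ≤ diagRamsey n 3 := hDC.multiRamsey_unitTransfer_le (by simp) (by simp [s, hge _]) (by simp)

theorem DC.diagRamsey_add_two_le (hDC : DC) (r q : ℕ) [NeZero q] :
    diagRamsey r (q + 2) ≤ diagRamsey (r * q) 3 := by
  let block : Fin (r * q) → Fin r := Prod.fst ∘ finProdFinEquiv.symm
  have hblock : Surjective block := Prod.fst_surjective.comp finProdFinEquiv.symm.surjective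
  have hcard (i : Fin r) : #{a | block a = i} = q := by
    calc #{a | block a = i} = #({i} ×ˢ (Finset.univ : Finset (Fin q))) :=
          Finset.card_equiv finProdFinEquiv.symm (by simp [block, eq_comm])
      _ = q := by simp
  simpa only [diagRamsey, hcard] using hDC.multiRamsey_card_fiber_add_two_le hblock

theorem le_pow_of_tendsto_root {a b : ℕ → ℝ≥0∞} {A B : ℝ≥0∞} (q : ℕ) [NeZero q]
    (hab : ∀ r, a r ≤ b (r * q))
    (ha : Tendsto (fun r : ℕ => a r ^ (1 / (r : ℝ))) atTop (𝓝 A))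
    (hb : Tendsto (fun r : ℕ => b r ^ (1 / (r : ℝ))) atTop (𝓝 B)) :
    A ≤ B ^ q := by
  have hmul : Tendsto (· * q) atTop atTop := tendsto_id.atTop_mul_const' (NeZero.pos q)
  have hpow := ((ENNReal.continuous_pow q).tendsto B).comp (hb.comp hmul)
  refine le_of_tendsto_of_tendsto' ha hpow fun r => ?_
  have hexp : 1 / ((r * q : ℕ) : ℝ) * (q : ℝ) = 1 / (r : ℝ) := by
    have : (q : ℝ) ≠ 0 := NeZero.ne _
    push_cast
    field_simp
  calc a r ^ (1 / (r : ℝ))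
      ≤ b (r * q) ^ (1 / (r : ℝ)) := ENNReal.rpow_le_rpow (hab r) (by positivity)
    _ = (b (r * q) ^ (1 / ((r * q : ℕ) : ℝ))) ^ q := by
      rw [← ENNReal.rpow_mul_natCast, hexp]

end

/-- if DC holds and `L_k = +∞` for some `k ≥ 3`, then `L_3 = +∞`,
where `L j` is the limit of `r ↦ R_r(j)^{1/r}` in `[0, ∞]`. -/
theorem stmt7 (hDC : DC) (L : ℕ → ℝ≥0∞)
    (hL : ∀ j, 2 ≤ j →
      Tendsto (fun r : ℕ => ((diagRamsey r j : ℝ≥0∞)) ^ (1 / (r : ℝ))) atTop (𝓝 (L j)))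
    (k : ℕ) (hk : 3 ≤ k) (hktop : L k = ⊤) :
    L 3 = ⊤ := by
  obtain ⟨q, rfl⟩ : ∃ q, k = q + 2 := Nat.exists_eq_add_of_le' (by lia)
  have : NeZero q := ⟨by lia⟩
  have hle : L (q + 2) ≤ L 3 ^ q :=
    le_pow_of_tendsto_root (b := fun r => diagRamsey r 3) q
      (fun r => Nat.cast_le.mpr (hDC.diagRamsey_add_two_le r q))
      (hL (q + 2) (by lia)) (hL 3 (by lia))
  rw [hktop, top_le_iff] at hle
  exact (ENNReal.pow_eq_top_iff.mp hle).1
end
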